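/- Let π_i and π_j be two stationary policies in a finite MDP with reward bounded by r_max and discount factor γ ∈ [0,1), let μ be an initial state distribution, and let d_{π_i} be the discounted state visitation distribution of π_i. Writing ΔV(s) = V^{π_i}(s) − V^{π_j}(s), δ_1(s) = 2 r_max D_TV(π_i(·|s), π_j(·|s)) and δ_2(s) = (2 r_max / (1 − γ)) D_TV(π_i(·|s), π_j(·|s)), the following inequality holds: Σ_s d_{π_i}(s) ΔV(s) ≤ max_{s}[δ_1(s) + γ δ_2(s)] + Σ_{s'} [d_{π_i}(s') − (1 − γ) μ(s')] ΔV(s'). -/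

import Mathlib

/-!
Let `Q` be the action value of `V^{πj}`, and let `K` be the state transition matrix of `πi`.
Subtracting the two Bellman equations gives `ΔV = g + γ K ΔV`, where
`g s = ∑ a, (πi(a|s) − πj(a|s)) Q(s, a)`. Pairing with `d`, the flow equation turns `γ dᵀ K` into
`dᵀ − (1 − γ) μᵀ`, so only `∑ s, d(s) g(s) ≤ max g` is left to estimate. This follows from
`|Q| ≤ rmax + γ rmax / (1 − γ)`, since the `ℓ¹` distance of the policies at `s` is `2 D_TV`.
-/

open Matrix

section WeightedSums

variable {ι R : Type*} [Ring R] [LinearOrder R] [IsOrderedRing R]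

theorem abs_sum_mul_le_sum_abs_mul (s : Finset ι) (w : ι → R) {f : ι → R} {M : R}
    (hf : ∀ i ∈ s, |f i| ≤ M) : |∑ i ∈ s, w i * f i| ≤ (∑ i ∈ s, |w i|) * M :=
  calc |∑ i ∈ s, w i * f i| ≤ ∑ i ∈ s, |w i * f i| := s.abs_sum_le_sum_abs _
    _ ≤ ∑ i ∈ s, |w i| * M := by
        gcongr with i hi
        rw [abs_mul]
        exact mul_le_mul_of_nonneg_left (hf i hi) (abs_nonneg _)
    _ = (∑ i ∈ s, |w i|) * M := (Finset.sum_mul ..).symm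

theorem abs_sum_mul_le_of_mem_stdSimplex [Fintype ι] {w f : ι → R} {M : R}
    (hw : w ∈ stdSimplex R ι) (hf : ∀ i, |f i| ≤ M) : |∑ i, w i * f i| ≤ M := by
  have hw_abs : ∑ i, |w i| = 1 := by simp only [abs_of_nonneg (hw.1 _), hw.2]
  simpa only [hw_abs, one_mul] using
    abs_sum_mul_le_sum_abs_mul Finset.univ w fun i _ ↦ hf i

end WeightedSums

theorem sum_mul_le_sup'_of_mem_stdSimplex {ι R : Type*} [Fintype ι] [Nonempty ι] [Field R]
    [LinearOrder R] [IsStrictOrderedRing R] {w : ι → R} (hw : w ∈ stdSimplex R ι) (f : ι → R) :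
    ∑ i, w i * f i ≤ Finset.univ.sup' Finset.univ_nonempty f := by
  have hw_pos : 0 < ∑ i, w i := hw.2 ▸ one_pos
  simpa only [Finset.centerMass_eq_of_sum_1 _ f hw.2, smul_eq_mul] using
    Finset.centerMass_le_sup (f := f) (fun i _ ↦ hw.1 i) hw_pos

theorem dotProduct_eq_add_of_eq_add_mulVec_of_eq_add_vecMul {n R : Type*} [Fintype n]
    [NonUnitalRing R] {K : Matrix n n R} {d ν g w : n → R}
    (hw : w = g + K *ᵥ w) (hd : d = ν + d ᵥ* K) :
    d ⬝ᵥ w = d ⬝ᵥ g + (d - ν) ⬝ᵥ w :=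
  calc d ⬝ᵥ w = d ⬝ᵥ (g + K *ᵥ w) := congrArg (d ⬝ᵥ ·) hw
    _ = d ⬝ᵥ g + (d ᵥ* K) ⬝ᵥ w := by rw [dotProduct_add, dotProduct_mulVec]
    _ = d ⬝ᵥ g + (d - ν) ⬝ᵥ w := by rw [← sub_eq_iff_eq_add'.mpr hd]

/-- The total variation distance between two distributions on a finite type, given by their mass
functions. -/
noncomputable def tvDist {A : Type*} [Fintype A] (p q : A → ℝ) : ℝ :=
  (1 / 2 : ℝ) * ∑ a, |p a - q a|

theorem abs_sum_sub_mul_le_tvDist {A : Type*} [Fintype A] (p q : A → ℝ) {f : A → ℝ} {M : ℝ}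
    (hf : ∀ a, |f a| ≤ M) : |∑ a, (p a - q a) * f a| ≤ 2 * M * tvDist p q :=
  (abs_sum_mul_le_sum_abs_mul Finset.univ (fun a ↦ p a - q a) fun a _ ↦ hf a).trans_eq <| by
    rw [tvDist]
    ring

section MarkovDecisionProcess

variable {S A : Type*} [Fintype S] {P : S → A → S → ℝ} {r : S → A → ℝ} {γ rmax : ℝ}

/-- The action value (Q-function) of `V`: the expected return of playing `a` at `s` and collecting
the discounted value `V` from the next state on. Here `P s a s'` is `P(s'|s,a)`. -/
def actionValue (P : S → A → S → ℝ) (r : S → A → ℝ) (γ : ℝ) (V : S → ℝ) (s : S) (a : A) : ℝ :=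
  r s a + γ * ∑ s', P s a s' * V s'

theorem abs_actionValue_le {V : S → ℝ} {M : ℝ} {s : S} {a : A}
    (hP : P s a ∈ stdSimplex ℝ S) (hr : |r s a| ≤ rmax) (hγ0 : 0 ≤ γ) (hV : ∀ s', |V s'| ≤ M) :
    |actionValue P r γ V s a| ≤ rmax + γ * M := by
  refine (abs_add_le _ _).trans (add_le_add hr ?_)
  rw [abs_mul, abs_of_nonneg hγ0]
  exact mul_le_mul_of_nonneg_left (abs_sum_mul_le_of_mem_stdSimplex hP hV) hγ0

variable [Fintype A] {π π' : S → A → ℝ} {V V' : S → ℝ}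

/-- `V` is a value function of the stationary policy `π`, i.e. solves its Bellman equation. Here
`π s a` is `π(a|s)`. -/
def IsValueFunction (P : S → A → S → ℝ) (r : S → A → ℝ) (γ : ℝ) (π : S → A → ℝ) (V : S → ℝ) :
    Prop :=
  ∀ s, V s = ∑ a, π s a * actionValue P r γ V s a

theorem IsValueFunction.abs_le (hV : IsValueFunction P r γ π V)
    (hP : ∀ s a, P s a ∈ stdSimplex ℝ S) (hr : ∀ s a, |r s a| ≤ rmax) (hγ0 : 0 ≤ γ) (hγ1 : γ < 1)
    (hπ : ∀ s, π s ∈ stdSimplex ℝ A) (s : S) : |V s| ≤ rmax / (1 - γ) := by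
  have : Nonempty S := ⟨s⟩
  obtain ⟨sₘ, hsₘ⟩ := Finite.exists_max fun s ↦ |V s|
  have hmax : |V sₘ| ≤ rmax + γ * |V sₘ| :=
    calc |V sₘ| = |∑ a, π sₘ a * actionValue P r γ V sₘ a| := congrArg _ (hV sₘ)
      _ ≤ rmax + γ * |V sₘ| := abs_sum_mul_le_of_mem_stdSimplex (hπ sₘ) fun a ↦
          abs_actionValue_le (hP sₘ a) (hr sₘ a) hγ0 hsₘ
  refine (hsₘ s).trans ((le_div_iff₀ (sub_pos.mpr hγ1)).mpr ?_)
  linarith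

/-- The transition matrix of the Markov chain on states induced by the stationary policy `π`; rows
are indexed by the current state. -/
def policyTransition (P : S → A → S → ℝ) (π : S → A → ℝ) : Matrix S S ℝ :=
  Matrix.of fun s s' ↦ ∑ a, π s a * P s a s'

theorem policyTransition_mulVec_apply (w : S → ℝ) (s : S) :
    (policyTransition P π *ᵥ w) s = ∑ a, π s a * ∑ s', P s a s' * w s' := by
  simp only [mulVec, dotProduct, policyTransition, of_apply, Finset.sum_mul, Finset.mul_sum,
    mul_assoc]
  exact Finset.sum_comm

theorem vecMul_policyTransition_apply (d : S → ℝ) (s : S) :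
    (d ᵥ* policyTransition P π) s = ∑ s', ∑ a, d s' * π s' a * P s' a s := by
  simp only [vecMul, dotProduct, policyTransition, of_apply, Finset.mul_sum, mul_assoc]

/-- The gain `s ↦ ∑ a, (π(a|s) - π'(a|s)) Q(s, a)` of playing `π` instead of `π'` for one step,
where `Q` is the action value of `V`. When `V` is the value function of `π'`, this is the expected
advantage of `π` over `π'`. -/
def policyGain (P : S → A → S → ℝ) (r : S → A → ℝ) (γ : ℝ) (π π' : S → A → ℝ) (V : S → ℝ) (s : S) :
    ℝ :=
  ∑ a, (π s a - π' s a) * actionValue P r γ V s a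

theorem IsValueFunction.sub_eq_policyGain_add_mulVec (hV : IsValueFunction P r γ π V)
    (hV' : IsValueFunction P r γ π' V') :
    V - V' = policyGain P r γ π π' V' + (γ • policyTransition P π) *ᵥ (V - V') := by
  ext s
  have hQ (a : A) : actionValue P r γ V s a - actionValue P r γ V' s a =
      γ * ∑ s', P s a s' * (V - V') s' := by
    simp only [actionValue, Pi.sub_apply, mul_sub, Finset.sum_sub_distrib]
    ring
  calc (V - V') s
      = ∑ a, π s a * actionValue P r γ V s a - ∑ a, π' s a * actionValue P r γ V' s a :=
        congrArg₂ (· - ·) (hV s) (hV' s)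
    _ = policyGain P r γ π π' V' s +
          ∑ a, π s a * (actionValue P r γ V s a - actionValue P r γ V' s a) := by
        rw [policyGain, ← Finset.sum_sub_distrib, ← Finset.sum_add_distrib]
        exact Finset.sum_congr rfl fun a _ ↦ by ring
    _ = (policyGain P r γ π π' V' + (γ • policyTransition P π) *ᵥ (V - V')) s := by
        simp only [hQ, Pi.add_apply, smul_mulVec, Pi.smul_apply, smul_eq_mul,
          policyTransition_mulVec_apply, Finset.mul_sum, mul_left_comm γ]

theorem IsValueFunction.policyGain_le (hV' : IsValueFunction P r γ π' V')
    (hP : ∀ s a, P s a ∈ stdSimplex ℝ S) (hr : ∀ s a, |r s a| ≤ rmax) (hγ0 : 0 ≤ γ) (hγ1 : γ < 1)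
    (hπ' : ∀ s, π' s ∈ stdSimplex ℝ A) (s : S) :
    policyGain P r γ π π' V' s ≤
      2 * rmax * tvDist (π s) (π' s) + γ * (2 * rmax / (1 - γ) * tvDist (π s) (π' s)) := by
  have hQ (a : A) : |actionValue P r γ V' s a| ≤ rmax + γ * (rmax / (1 - γ)) :=
    abs_actionValue_le (hP s a) (hr s a) hγ0 (hV'.abs_le hP hr hγ0 hγ1 hπ')
  calc policyGain P r γ π π' V' s
      ≤ 2 * (rmax + γ * (rmax / (1 - γ))) * tvDist (π s) (π' s) :=
        (le_abs_self _).trans (abs_sum_sub_mul_le_tvDist _ _ hQ)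
    _ = _ := by ring

end MarkovDecisionProcess

/-- With `ΔV(s) = V^{πi}(s) − V^{πj}(s)`,
`δ₁(s) = 2 rmax D_TV(πi(·|s), πj(·|s))` and
`δ₂(s) = (2 rmax / (1 − γ)) D_TV(πi(·|s), πj(·|s))`, and `d` the discounted state
visitation distribution of `πi`, we have
`Σ_s d(s) ΔV(s) ≤ max_s [δ₁(s) + γ δ₂(s)] + Σ_{s'} (d(s') − (1 − γ) μ(s')) ΔV(s')`. -/
theorem visitation_weighted_value_difference_bound
    {S A : Type*} [Fintype S] [Fintype A] [Nonempty S] [Nonempty A]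
    (P : S → A → S → ℝ)
    (hP0 : ∀ s a s', 0 ≤ P s a s') (hP1 : ∀ s a, ∑ s', P s a s' = 1)
    (r : S → A → ℝ) (rmax : ℝ) (hr : ∀ s a, |r s a| ≤ rmax)
    (γ : ℝ) (hγ0 : 0 ≤ γ) (hγ1 : γ < 1)
    (πi πj : S → A → ℝ)
    (hπi0 : ∀ s a, 0 ≤ πi s a) (hπi1 : ∀ s, ∑ a, πi s a = 1)
    (hπj0 : ∀ s a, 0 ≤ πj s a) (hπj1 : ∀ s, ∑ a, πj s a = 1)
    (Vi Vj : S → ℝ)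
    (hVi : ∀ s, Vi s = ∑ a, πi s a * (r s a + γ * ∑ s', P s a s' * Vi s'))
    (hVj : ∀ s, Vj s = ∑ a, πj s a * (r s a + γ * ∑ s', P s a s' * Vj s'))
    (μ : S → ℝ) (hμ0 : ∀ s, 0 ≤ μ s) (hμ1 : ∑ s, μ s = 1)
    -- `d` is the discounted state visitation distribution of `πi`
    (d : S → ℝ) (hd0 : ∀ s, 0 ≤ d s) (hd1 : ∑ s, d s = 1)
    (hd : ∀ s, d s = (1 - γ) * μ s + γ * ∑ s', ∑ a, d s' * πi s' a * P s' a s) :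
    ∑ s, d s * (Vi s - Vj s) ≤
      Finset.univ.sup' Finset.univ_nonempty
        (fun s =>
          2 * rmax * ((1 / 2 : ℝ) * ∑ a, |πi s a - πj s a|) +
            γ * (2 * rmax / (1 - γ) * ((1 / 2 : ℝ) * ∑ a, |πi s a - πj s a|))) +
      ∑ s', (d s' - (1 - γ) * μ s') * (Vi s' - Vj s') := by
  have hP : ∀ s a, P s a ∈ stdSimplex ℝ S := fun s a ↦ ⟨hP0 s a, hP1 s a⟩
  have hπj : ∀ s, πj s ∈ stdSimplex ℝ A := fun s ↦ ⟨hπj0 s, hπj1 s⟩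
  have hValue_i : IsValueFunction P r γ πi Vi := hVi
  have hValue_j : IsValueFunction P r γ πj Vj := hVj
  have hflow : d = (1 - γ) • μ + d ᵥ* (γ • policyTransition P πi) := by
    ext s
    simpa only [vecMul_smul, Pi.add_apply, Pi.smul_apply, smul_eq_mul,
      vecMul_policyTransition_apply] using hd s
  calc ∑ s, d s * (Vi s - Vj s)
      = ∑ s, d s * policyGain P r γ πi πj Vj s +
          ∑ s', (d s' - (1 - γ) * μ s') * (Vi s' - Vj s') :=
        dotProduct_eq_add_of_eq_add_mulVec_of_eq_add_vecMul
          (hValue_i.sub_eq_policyGain_add_mulVec hValue_j) hflow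
    _ ≤ _ := by
        gcongr
        refine (sum_mul_le_sup'_of_mem_stdSimplex ⟨hd0, hd1⟩ _).trans ?_
        exact Finset.sup'_mono_fun fun s _ ↦ hValue_j.policyGain_le hP hr hγ0 hγ1 hπj s
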